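/- Let (Ω,Σ,μ) be a finite measure space, Z a real Banach space, X ⊆ Z* a norm-closed subspace which is norming for Z, and K ⊆ Z a set such that the convex hull co(K) is relatively convex block compact in (Z,σ(Z,X)). If ν : Σ → Z* is a countably additive μ-continuous vector measure satisfying condition (G), then for every B ∈ Σ the restriction of the functional ν(B) to K is σ(Z,X)-continuous. -/

import Mathlib

open MeasureTheory Filter Set Topology
open scoped UniformConvergence

noncomputable section

/-- The topology `σ(Z,X)` on `Z` of pointwise convergence on a subspace `X ⊆ Z*`. -/
def sigmaTop {Z : Type*} [NormedAddCommGroup Z] [NormedSpace ℝ Z]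
    (X : Submodule ℝ (Z →L[ℝ] ℝ)) : TopologicalSpace Z :=
  TopologicalSpace.induced (fun z => fun x : X => (x : Z →L[ℝ] ℝ) z) Pi.topologicalSpace

/-- The weak* topology on the dual of `E`: pointwise convergence on `E`. -/
def wstarTop (E : Type*) [NormedAddCommGroup E] [NormedSpace ℝ E] :
    TopologicalSpace (E →L[ℝ] ℝ) :=
  TopologicalSpace.induced (fun f => (f : E → ℝ)) Pi.topologicalSpace

/-- A norm-closed subspace `X ⊆ Z*` is norming for `Z` if
`|||z||| = sup {⟨x,z⟩ : x ∈ B_X}` is an equivalent norm on `Z`; since this sup is always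
`≤ ‖z‖`, this amounts to the existence of `c > 0` with `c⬝‖z‖ ≤ |||z|||` for all `z`. -/
def IsNorming {Z : Type*} [NormedAddCommGroup Z] [NormedSpace ℝ Z]
    (X : Submodule ℝ (Z →L[ℝ] ℝ)) : Prop :=
  ∃ c > (0 : ℝ), ∀ z : Z, c * ‖z‖ ≤ sSup {r : ℝ | ∃ x ∈ X, ‖x‖ ≤ 1 ∧ r = x z}

/-- The average range `𝒜_ν(A) = {ν(B)/μ(B) : B ∈ Σ, B ⊆ A, μ(B) > 0}`. -/
def avgRange {Ω : Type*} [MeasurableSpace Ω] {Z : Type*} [NormedAddCommGroup Z]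
    [NormedSpace ℝ Z] (μ : Measure Ω) (ν : VectorMeasure Ω (Z →L[ℝ] ℝ)) (A : Set Ω) :
    Set (Z →L[ℝ] ℝ) :=
  {w | ∃ B : Set Ω, MeasurableSet B ∧ B ⊆ A ∧ 0 < μ B ∧ w = (μ B).toReal⁻¹ • ν B}

/-- Condition (G): for every `A ∈ Σ` with `μ(A) > 0`, the `w*`-closed convex hull of the
average range `𝒜_ν(A)` intersects `X`. -/
def CondG {Ω : Type*} [MeasurableSpace Ω] {Z : Type*} [NormedAddCommGroup Z]
    [NormedSpace ℝ Z] (μ : Measure Ω) (ν : VectorMeasure Ω (Z →L[ℝ] ℝ))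
    (X : Submodule ℝ (Z →L[ℝ] ℝ)) : Prop :=
  ∀ A : Set Ω, MeasurableSet A → 0 < μ A →
    (@closure _ (wstarTop Z) (convexHull ℝ (avgRange μ ν A)) ∩
      (X : Set (Z →L[ℝ] ℝ))).Nonempty

/-- `h` is a convex block subsequence of `g`: `h k = ∑_{n ∈ I k} a n • g n` where the finite
sets `I k` satisfy `max (I k) < min (I (k+1))` and the `a n` are non-negative reals summing
to `1` over each `I k`. -/
def ConvexBlock {E : Type*} [AddCommMonoid E] [Module ℝ E] (g h : ℕ → E) : Prop :=
  ∃ (I : ℕ → Finset ℕ) (a : ℕ → ℝ),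
    (∀ k, ∀ n ∈ I k, ∀ m ∈ I (k + 1), n < m) ∧
    (∀ n, 0 ≤ a n) ∧ (∀ k, ∑ n ∈ I k, a n = 1) ∧
    (∀ k, h k = ∑ n ∈ I k, a n • g n)

/-- `(B_{X*}, w*)` is convex block compact: every sequence in the closed unit ball of `X*`
admits a convex block subsequence which is `w*`-convergent. -/
def DualBallConvexBlockCompact (X : Type*) [NormedAddCommGroup X] [NormedSpace ℝ X] : Prop :=
  ∀ g : ℕ → (X →L[ℝ] ℝ), (∀ n, ‖g n‖ ≤ 1) →
    ∃ h : ℕ → (X →L[ℝ] ℝ), ConvexBlock g h ∧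
      ∃ f : X →L[ℝ] ℝ, Tendsto h atTop (@nhds _ (wstarTop X) f)

/-!
Let `T : Z** → L¹(μ)` send `Φ` to the Radon–Nikodym derivative of `Φ ∘ ν`. It is weak*-to-weak
continuous, and `Φ (ν B)` is the integral of `T Φ` over `B`. If an ultrafilter on the bounded set
`K` converges to `z` in `σ(Z,X)`, it converges weak* to some `Λ ∈ Z**` which agrees with `z` on `X`,
and the theorem amounts to `T Λ = T z`.

Fix `x ∈ X`. By Mazur some `zₙ ∈ co(K)` satisfy `T zₙ → T Λ` in norm and `x zₙ → Λ x`, and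
passing to convex blocks we may assume `zₙ → w` in `σ(Z,X)`. Condition (G) provides, for every `A`
of positive measure, a `u ∈ X` with `u y ≥ inf_A T y` for all `y`. Applied on a set where, by
Egorov, the `T zₙ` converge uniformly, it yields `T w = T Λ`, so `T Λ - T z = T (w - z)` with
`x (w - z) = 0`. As `x` was arbitrary, (G) applied to a set where `T Λ - T z ≥ ε > 0`, or where
`T z - T Λ ≥ ε`, gives a contradiction.
-/

section LpDuality

variable {Ω : Type*} [MeasurableSpace Ω] {μ : Measure Ω}

lemma L1_ext_of_forall_setIntegral_eq {F G : Lp ℝ 1 μ}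
    (h : ∀ A, MeasurableSet A → ∫ ω in A, F ω ∂μ = ∫ ω in A, G ω ∂μ) : F = G :=
  Lp.ext <| Integrable.ae_eq_of_forall_setIntegral_eq _ _ (L1.integrable_coeFn F)
    (L1.integrable_coeFn G) fun A hA _ => h A hA

lemma setIntegral_signedMeasure_rnDeriv [SigmaFinite μ] {s : SignedMeasure Ω}
    (hs : ∀ A, μ A = 0 → s A = 0) {A : Set Ω} (hA : MeasurableSet A) :
    ∫ ω in A, s.rnDeriv μ ω ∂μ = s A := by
  have hac : s ≪ᵥ μ.toENNRealVectorMeasure :=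
    VectorMeasure.AbsolutelyContinuous.mk fun B hB hB0 =>
      hs B <| by rwa [Measure.toENNRealVectorMeasure_apply_measurable hB] at hB0
  rw [← withDensityᵥ_apply (SignedMeasure.integrable_rnDeriv s μ) hA,
    SignedMeasure.withDensityᵥ_rnDeriv_eq s μ hac]

lemma ae_abs_le_of_forall_abs_setIntegral_le [IsFiniteMeasure μ] {f : Ω → ℝ}
    (hf : Integrable f μ) {C : ℝ}
    (h : ∀ A, MeasurableSet A → |∫ ω in A, f ω ∂μ| ≤ C * μ.real A) :
    ∀ᵐ ω ∂μ, |f ω| ≤ C := by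
  have hle : f ≤ᵐ[μ] fun _ => C :=
    ae_le_of_forall_setIntegral_le hf (integrable_const C) fun A hA _ => by
      rw [setIntegral_const, smul_eq_mul, mul_comm]
      exact (abs_le.1 (h A hA)).2
  have hge : (fun _ => -C) ≤ᵐ[μ] f :=
    ae_le_of_forall_setIntegral_le (integrable_const (-C)) hf fun A hA _ => by
      rw [setIntegral_const, smul_eq_mul, mul_neg, mul_comm]
      exact (abs_le.1 (h A hA)).1
  filter_upwards [hle, hge] with ω hω hω' using abs_le.2 ⟨hω', hω⟩

lemma indicatorConstLp_eq_smul_one {p : ENNReal} {A : Set Ω} (hA : MeasurableSet A)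
    (hμA : μ A ≠ ⊤) (c : ℝ) :
    indicatorConstLp p hA hμA c = c • indicatorConstLp p hA hμA (1 : ℝ) := by
  refine (MemLp.toLp_congr _ _ (ae_of_all _ fun ω => ?_)).trans (MemLp.toLp_const_smul c _)
  by_cases hω : ω ∈ A <;> simp [hω]

lemma L1_continuousLinearMap_ext [IsFiniteMeasure μ] {F : Type*} [NormedAddCommGroup F]
    [NormedSpace ℝ F] {φ ψ : Lp ℝ 1 μ →L[ℝ] F}
    (h : ∀ A (hA : MeasurableSet A), φ (indicatorConstLp 1 hA (measure_ne_top μ A) 1) =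
      ψ (indicatorConstLp 1 hA (measure_ne_top μ A) 1)) : φ = ψ := by
  ext G
  induction G using Lp.induction ENNReal.one_ne_top with
  | indicatorConst c hA hμA =>
    rw [Lp.simpleFunc.coe_indicatorConst, indicatorConstLp_eq_smul_one, map_smul, map_smul, h]
  | add hf hg _ ihf ihg => rw [map_add, map_add, ihf, ihg]
  | isClosed => exact isClosed_eq φ.continuous ψ.continuous

/-- The duality pairing `L∞(μ) × L¹(μ) → ℝ`, `(h, F) ↦ ∫ h F dμ`. -/
abbrev linftyL1Pairing (μ : Measure Ω) : Lp ℝ ⊤ μ →L[ℝ] StrongDual ℝ (Lp ℝ 1 μ) :=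
  ContinuousLinearMap.lpPairing μ ⊤ 1 (ContinuousLinearMap.mul ℝ ℝ)

open scoped Classical in
/-- The vector measure `A ↦ 1_A` with values in `L¹(μ)`. Composed with `φ ∈ L¹(μ)*` it is the signed
measure whose density represents `φ`. -/
def indicatorL1Measure (μ : Measure Ω) [IsFiniteMeasure μ] : VectorMeasure Ω (Lp ℝ 1 μ) :=
  VectorMeasure.of_additive_of_le_measure (μ := μ)
    (fun A => if hA : MeasurableSet A then indicatorConstLp 1 hA (measure_ne_top μ A) 1 else 0)
    (fun A => by
      split_ifs with hA
      · simpa using enorm_indicatorConstLp_le (p := 1) (hs := hA) (hμs := measure_ne_top μ A)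
          (c := (1 : ℝ))
      · simp)
    (fun A B hA hB hAB => by
      simpa only [dif_pos hA, dif_pos hB, dif_pos (hA.union hB)] using
        indicatorConstLp_disjoint_union hA hB (measure_ne_top μ A) (measure_ne_top μ B) hAB 1)
    (fun A hA => dif_neg hA)

lemma indicatorL1Measure_apply [IsFiniteMeasure μ] {A : Set Ω} (hA : MeasurableSet A) :
    indicatorL1Measure μ A = indicatorConstLp 1 hA (measure_ne_top μ A) 1 :=
  dif_pos hA

lemma norm_indicatorL1Measure [IsFiniteMeasure μ] {A : Set Ω} (hA : MeasurableSet A) :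
    ‖indicatorL1Measure μ A‖ = μ.real A := by
  rw [indicatorL1Measure_apply hA, norm_indicatorConstLp one_ne_zero ENNReal.one_ne_top]
  simp

lemma indicatorL1Measure_eq_zero [IsFiniteMeasure μ] {A : Set Ω} (hA : μ A = 0) :
    indicatorL1Measure μ A = 0 := by
  by_cases hAm : MeasurableSet A
  · rw [← norm_eq_zero, norm_indicatorL1Measure hAm, measureReal_def, hA, ENNReal.toReal_zero]
  · exact VectorMeasure.not_measurable _ hAm

lemma exists_simpleFunc_forall_abs_sub_le {f : Ω → ℝ} (hf : Measurable f) {C : ℝ}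
    (hC : ∀ ω, |f ω| ≤ C) {δ : ℝ} (hδ : 0 < δ) :
    ∃ g : SimpleFunc Ω ℝ, ∀ ω, |f ω - g ω| ≤ δ := by
  let q : Ω → ℤ := fun ω => ⌊f ω / δ⌋
  have hq : Measurable q := (hf.div_const δ).floor
  have hq_range : (range q).Finite := by
    refine (finite_Icc ⌊-C / δ⌋ ⌊C / δ⌋).subset (range_subset_iff.2 fun ω => ?_)
    obtain ⟨hlo, hhi⟩ := abs_le.1 (hC ω)
    exact ⟨Int.floor_le_floor (by gcongr), Int.floor_le_floor (by gcongr)⟩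
  let steps : SimpleFunc Ω ℤ := ⟨q, fun n => hq (measurableSet_singleton n), hq_range⟩
  refine ⟨steps.map fun n : ℤ => (n : ℝ) * δ, fun ω => ?_⟩
  have hlo : (q ω : ℝ) * δ ≤ f ω := (le_div_iff₀ hδ).1 (Int.floor_le _)
  have hhi : f ω < (q ω + 1 : ℝ) * δ := (div_lt_iff₀ hδ).1 (Int.lt_floor_add_one _)
  change |f ω - q ω * δ| ≤ δ
  rw [abs_le]
  constructor <;> linarith

lemma simpleFunc_toLp_mem_of_indicatorConstLp_mem [IsFiniteMeasure μ] {p : ENNReal}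
    {V : Submodule ℝ (Lp ℝ p μ)}
    (hV : ∀ A (hA : MeasurableSet A), indicatorConstLp p hA (measure_ne_top μ A) 1 ∈ V)
    (g : SimpleFunc Ω ℝ) : (g.memLp_of_isFiniteMeasure p μ).toLp g ∈ V := by
  induction g using SimpleFunc.induction with
  | @const c A hA =>
    have hsmul := V.smul_mem c (hV A hA)
    rw [← indicatorConstLp_eq_smul_one] at hsmul
    convert hsmul using 1
    refine MemLp.toLp_congr _ _ (ae_of_all _ fun ω => ?_)
    simp [Set.indicator, Set.piecewise]
  | add _ hf hg => exact V.add_mem hf hg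

lemma Linfty_ae_abs_le_norm (h : Lp ℝ ⊤ μ) : ∀ᵐ ω ∂μ, |h ω| ≤ ‖h‖ := by
  rw [Lp.norm_def, toReal_eLpNorm (Lp.aestronglyMeasurable h)]
  exact ae_le_lpNorm_exponent_top (Lp.memLp h)

lemma Linfty_mem_of_indicatorConstLp_mem [IsFiniteMeasure μ] {V : Submodule ℝ (Lp ℝ ⊤ μ)}
    (hVclosed : IsClosed (V : Set (Lp ℝ ⊤ μ)))
    (hV : ∀ A (hA : MeasurableSet A), indicatorConstLp ⊤ hA (measure_ne_top μ A) 1 ∈ V)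
    (h : Lp ℝ ⊤ μ) : h ∈ V := by
  rw [← SetLike.mem_coe, ← hVclosed.closure_eq, Metric.mem_closure_iff]
  intro ε hε
  let f : Ω → ℝ := fun ω => max (-‖h‖) (min ‖h‖ (h ω))
  have hf : Measurable f :=
    measurable_const.max (measurable_const.min (Lp.stronglyMeasurable h).measurable)
  have hf_bound : ∀ ω, |f ω| ≤ ‖h‖ := fun ω =>
    abs_le.2 ⟨le_max_left _ _, max_le (neg_le_self (norm_nonneg h)) (min_le_left _ _)⟩
  have hf_eq : h =ᵐ[μ] f := by
    filter_upwards [Linfty_ae_abs_le_norm h] with ω hω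
    obtain ⟨hlo, hhi⟩ := abs_le.1 hω
    simp only [f, min_eq_right hhi, max_eq_right hlo]
  obtain ⟨g, hg⟩ := exists_simpleFunc_forall_abs_sub_le hf hf_bound (half_pos hε)
  refine ⟨_, simpleFunc_toLp_mem_of_indicatorConstLp_mem hV g, ?_⟩
  have hgmem := g.memLp_of_isFiniteMeasure ⊤ μ
  have hclose : ∀ᵐ ω ∂μ, ‖(h - hgmem.toLp g : Lp ℝ ⊤ μ) ω‖ ≤ ε / 2 := by
    filter_upwards [hf_eq, hgmem.coeFn_toLp, Lp.coeFn_sub h (hgmem.toLp g)] with ω hω hgω hsub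
    rw [hsub, Pi.sub_apply, hω, hgω]
    exact hg ω
  calc dist h (hgmem.toLp g) = ‖h - hgmem.toLp g‖ := dist_eq_norm _ _
    _ ≤ ε / 2 := by simpa using Lp.norm_le_of_ae_bound (half_pos hε).le hclose
    _ < ε := half_lt_self hε

end LpDuality

section DualDensity

variable {Ω : Type*} [MeasurableSpace Ω] {μ : Measure Ω} [IsFiniteMeasure μ]
  {E : Type*} [NormedAddCommGroup E] [NormedSpace ℝ E]

lemma exists_L1_setIntegral_eq_apply (ν : VectorMeasure Ω E) (hν : ∀ A, μ A = 0 → ν A = 0)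
    (Φ : StrongDual ℝ E) :
    ∃ F : Lp ℝ 1 μ, ∀ A, MeasurableSet A → ∫ ω in A, F ω ∂μ = Φ (ν A) := by
  let s : SignedMeasure Ω := ν.mapRange (Φ : E →+ ℝ) Φ.continuous
  have hs : ∀ A, μ A = 0 → s A = 0 := fun A hA =>
    (VectorMeasure.mapRange_apply ν Φ.continuous).trans (by rw [hν A hA, map_zero])
  have hderiv := SignedMeasure.integrable_rnDeriv s μ
  refine ⟨hderiv.toL1 _, fun A hA => ?_⟩
  rw [integral_congr_ae (ae_restrict_of_ae hderiv.coeFn_toL1),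
    setIntegral_signedMeasure_rnDeriv hs hA]
  exact VectorMeasure.mapRange_apply ν Φ.continuous

/-- The operator `Φ ↦ d(Φ ∘ ν)/dμ` from `E*` to `L¹(μ)` of a `μ`-continuous vector measure `ν`;
it is bounded by the closed graph theorem. -/
def dualDensity (ν : VectorMeasure Ω E) (hν : ∀ A, μ A = 0 → ν A = 0) :
    StrongDual ℝ E →L[ℝ] Lp ℝ 1 μ :=
  let density := fun Φ => (exists_L1_setIntegral_eq_apply ν hν Φ).choose
  have setIntegral_density : ∀ Φ A, MeasurableSet A → ∫ ω in A, density Φ ω ∂μ = Φ (ν A) :=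
    fun Φ => (exists_L1_setIntegral_eq_apply ν hν Φ).choose_spec
  ContinuousLinearMap.ofSeqClosedGraph
    (g :=
      { toFun := density
        map_add' := fun Φ Ψ => L1_ext_of_forall_setIntegral_eq fun A hA => by
          rw [integral_congr_ae (ae_restrict_of_ae (Lp.coeFn_add (density Φ) (density Ψ)))]
          simp only [Pi.add_apply]
          rw [integral_add (L1.integrable_coeFn _).integrableOn
            (L1.integrable_coeFn _).integrableOn]
          simp only [setIntegral_density _ A hA, add_apply]
        map_smul' := fun c Φ => L1_ext_of_forall_setIntegral_eq fun A hA => by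
          rw [integral_congr_ae (ae_restrict_of_ae (Lp.coeFn_smul _ (density Φ)))]
          simp only [Pi.smul_apply, integral_smul, setIntegral_density _ A hA,
            smul_apply, RingHom.id_apply] })
    fun u Φ G hu hG => L1_ext_of_forall_setIntegral_eq fun A hA => by
      have hlim : Tendsto (fun n => u n (ν A)) atTop (𝓝 (∫ ω in A, G ω ∂μ)) :=
        (((continuous_setIntegral A).tendsto G).comp hG).congr fun n =>
          setIntegral_density (u n) A hA
      refine tendsto_nhds_unique hlim ?_
      change Tendsto _ _ (𝓝 (∫ ω in A, density Φ ω ∂μ))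
      rw [setIntegral_density Φ A hA]
      exact ((ContinuousLinearMap.apply ℝ ℝ (ν A)).continuous.tendsto Φ).comp hu

lemma setIntegral_dualDensity (ν : VectorMeasure Ω E) (hν : ∀ A, μ A = 0 → ν A = 0)
    (Φ : StrongDual ℝ E) {A : Set Ω} (hA : MeasurableSet A) :
    ∫ ω in A, dualDensity ν hν Φ ω ∂μ = Φ (ν A) :=
  (exists_L1_setIntegral_eq_apply ν hν Φ).choose_spec A hA

lemma linftyL1Pairing_surjective : Function.Surjective (linftyL1Pairing μ) := by
  intro φ
  let h := dualDensity (indicatorL1Measure μ) (fun _ => indicatorL1Measure_eq_zero) φ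
  have hset : ∀ A, MeasurableSet A → ∫ ω in A, h ω ∂μ = φ (indicatorL1Measure μ A) :=
    fun A hA => setIntegral_dualDensity _ _ φ hA
  have hbound : ∀ᵐ ω ∂μ, |h ω| ≤ ‖φ‖ :=
    ae_abs_le_of_forall_abs_setIntegral_le (L1.integrable_coeFn h) fun A hA => by
      rw [hset A hA, ← norm_indicatorL1Measure hA]
      exact φ.le_opNorm _
  have hmem : MemLp h ⊤ μ := memLp_top_of_bound (Lp.aestronglyMeasurable h) ‖φ‖ hbound
  refine ⟨hmem.toLp h, L1_continuousLinearMap_ext fun A hA => ?_⟩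
  rw [← indicatorL1Measure_apply hA, ← hset A hA, ← integral_indicator hA,
    ContinuousLinearMap.lpPairing_eq_integral, indicatorL1Measure_apply hA]
  refine integral_congr_ae ?_
  filter_upwards [hmem.coeFn_toLp, indicatorConstLp_coeFn (p := 1) (hs := hA)
    (hμs := measure_ne_top μ A) (c := (1 : ℝ))] with ω hω hωA
  rw [hω, hωA]
  by_cases hmemA : ω ∈ A <;> simp [hmemA]

set_option maxSynthPendingDepth 5 in
lemma isClosed_range_inclusionInDoubleDual (E : Type*) [NormedAddCommGroup E] [NormedSpace ℝ E]
    [CompleteSpace E] : IsClosed (range (NormedSpace.inclusionInDoubleDual ℝ E)) :=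
  (NormedSpace.inclusionInDoubleDualLi ℝ (E := E)).isometry.isClosedEmbedding.isClosed_range

-- Equivalently, `dualDensity ν hν` is continuous from the weak* topology of `E*` to the weak
-- topology of `L¹(μ)`. The functionals `h ∈ L∞` with this property form a closed subspace because
-- `E` is closed in its bidual, and for `h = 1_A` one takes `ζ = ν A`.
theorem exists_forall_apply_dualDensity_eq [CompleteSpace E] (ν : VectorMeasure Ω E)
    (hν : ∀ A, μ A = 0 → ν A = 0) (φ : StrongDual ℝ (Lp ℝ 1 μ)) :
    ∃ ζ : E, ∀ Φ, φ (dualDensity ν hν Φ) = Φ ζ := by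
  let V : Submodule ℝ (Lp ℝ ⊤ μ) :=
    (NormedSpace.inclusionInDoubleDual ℝ E).range.comap
      ((ContinuousLinearMap.precomp ℝ (dualDensity ν hν)).comp (linftyL1Pairing μ)).toLinearMap
  have hVclosed : IsClosed (V : Set (Lp ℝ ⊤ μ)) :=
    (isClosed_range_inclusionInDoubleDual E).preimage (ContinuousLinearMap.continuous _)
  have hV : ∀ A (hA : MeasurableSet A), indicatorConstLp ⊤ hA (measure_ne_top μ A) 1 ∈ V := by
    refine fun A hA => ⟨ν A, ?_⟩
    ext Φ
    change Φ (ν A) = linftyL1Pairing μ _ (dualDensity ν hν Φ)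
    rw [ContinuousLinearMap.lpPairing_eq_integral, ← setIntegral_dualDensity ν hν Φ hA,
      ← integral_indicator hA]
    refine integral_congr_ae ?_
    filter_upwards [indicatorConstLp_coeFn (p := ⊤) (hs := hA) (hμs := measure_ne_top μ A)
      (c := (1 : ℝ))] with ω hω
    rw [hω]
    by_cases hmemA : ω ∈ A <;> simp [hmemA]
  obtain ⟨h, rfl⟩ := linftyL1Pairing_surjective φ
  obtain ⟨ζ, hζ⟩ := Linfty_mem_of_indicatorConstLp_mem hVclosed hV h
  exact ⟨ζ, fun Φ => (congrArg (· Φ) hζ).symm⟩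

lemma exists_forall_apply_dualDensity_prod_eq [CompleteSpace E] (ν : VectorMeasure Ω E)
    (hν : ∀ A, μ A = 0 → ν A = 0) (e : E) (φ : StrongDual ℝ (Lp ℝ 1 μ × ℝ)) :
    ∃ ζ : E, ∀ Φ, φ (dualDensity ν hν Φ, Φ e) = Φ ζ := by
  obtain ⟨ζ, hζ⟩ := exists_forall_apply_dualDensity_eq ν hν (φ.comp (.inl ℝ _ ℝ))
  refine ⟨ζ + φ (0, 1) • e, fun Φ => ?_⟩
  have hsplit : (dualDensity ν hν Φ, Φ e) =
      (dualDensity ν hν Φ, 0) + Φ e • ((0 : Lp ℝ 1 μ), (1 : ℝ)) := by simp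
  rw [hsplit, map_add, map_smul, map_add, map_smul, ← hζ, smul_eq_mul, smul_eq_mul, mul_comm]
  rfl

end DualDensity

section ConvexBlock

namespace ConvexBlock

variable {E : Type*} [AddCommGroup E] [Module ℝ E] {g h : ℕ → E}

lemma apply_mem (hgh : ConvexBlock g h) {S : Set E} (hS : Convex ℝ S) {k : ℕ}
    (hg : ∀ n ≥ k, g n ∈ S) : h k ∈ S := by
  obtain ⟨I, a, hI, ha, hsum, hh⟩ := hgh
  have hI_nonempty : ∀ j, (I j).Nonempty := fun j =>
    Finset.nonempty_of_sum_ne_zero (f := a) (by simp [hsum])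
  have le_of_mem : ∀ j, ∀ n ∈ I j, j ≤ n := by
    intro j
    induction j with
    | zero => exact fun n _ => n.zero_le
    | succ j ih =>
      obtain ⟨m, hm⟩ := hI_nonempty j
      exact fun n hn => (ih m hm).trans_lt (hI j m hm n hn)
  rw [hh k]
  exact hS.sum_mem (fun n _ => ha n) (hsum k) fun n hn => hg n (le_of_mem k n hn)

lemma map {F : Type*} [AddCommGroup F] [Module ℝ F] (hgh : ConvexBlock g h) (f : E →ₗ[ℝ] F) :
    ConvexBlock (f ∘ g) (f ∘ h) := by
  obtain ⟨I, a, hI, ha, hsum, hh⟩ := hgh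
  exact ⟨I, a, hI, ha, hsum, fun k => by simp [hh k]⟩

lemma tendsto [TopologicalSpace E] [LocallyConvexSpace ℝ E] (hgh : ConvexBlock g h) {x : E}
    (hg : Tendsto g atTop (𝓝 x)) : Tendsto h atTop (𝓝 x) := by
  refine (LocallyConvexSpace.convex_basis (𝕜 := ℝ) x).tendsto_right_iff.2 fun S ⟨hSx, hS⟩ => ?_
  obtain ⟨N, hN⟩ := eventually_atTop.1 (hg hSx)
  exact eventually_atTop.2 ⟨N, fun k hk => hgh.apply_mem hS fun n hn => hN n (hk.trans hn)⟩

end ConvexBlock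

/-- Relative convex block compactness of `S` in `(E, t)`. The topology is an explicit argument
because it is `σ(Z,X)` on a space that already carries a norm topology. -/
def IsRelConvexBlockCompact {E : Type*} [AddCommMonoid E] [Module ℝ E] (t : TopologicalSpace E)
    (S : Set E) : Prop :=
  ∀ g : ℕ → E, (∀ n, g n ∈ S) →
    ∃ h : ℕ → E, ConvexBlock g h ∧ ∃ x : E, Tendsto h atTop (@nhds _ t x)

end ConvexBlock

section Boundedness

variable {Z : Type*} [NormedAddCommGroup Z] [NormedSpace ℝ Z] {X : Submodule ℝ (Z →L[ℝ] ℝ)}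

lemma tendsto_apply_of_tendsto_sigmaTop {α : Type*} {l : Filter α} {w : α → Z} {w₀ : Z}
    (hw : Tendsto w l (@nhds _ (sigmaTop X) w₀)) {x : Z →L[ℝ] ℝ} (hx : x ∈ X) :
    Tendsto (fun a => x (w a)) l (𝓝 (x w₀)) := by
  rw [sigmaTop, nhds_induced, tendsto_comap_iff, tendsto_pi_nhds] at hw
  exact hw ⟨x, hx⟩

lemma IsRelConvexBlockCompact.bddAbove_image {S : Set Z}
    (hS : IsRelConvexBlockCompact (sigmaTop X) S) {x : Z →L[ℝ] ℝ} (hx : x ∈ X) :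
    BddAbove (x '' S) := by
  by_contra hunbdd
  have hlarge : ∀ n : ℕ, ∃ z ∈ S, (n : ℝ) < x z := fun n => by
    simpa using not_bddAbove_iff.1 hunbdd n
  choose z hzS hz using hlarge
  obtain ⟨w, hzw, w₀, hw⟩ := hS z hzS
  have hge : ∀ k : ℕ, (k : ℝ) ≤ x (w k) := fun k =>
    (hzw.map x.toLinearMap).apply_mem (convex_Ici (k : ℝ)) fun n hn =>
      (Nat.cast_le.2 hn).trans (hz n).le
  exact not_tendsto_nhds_of_tendsto_atTop (tendsto_atTop_mono hge tendsto_natCast_atTop_atTop) _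
    (tendsto_apply_of_tendsto_sigmaTop hw hx)

set_option maxSynthPendingDepth 5 in
lemma IsNorming.isBounded_of_forall_bddAbove_image (hX : IsNorming X)
    (hXclosed : IsClosed (X : Set (Z →L[ℝ] ℝ))) {S : Set Z}
    (hS : ∀ x ∈ X, BddAbove (x '' S)) : Bornology.IsBounded S := by
  have : CompleteSpace X := hXclosed.completeSpace_coe
  let ev : S → (X →L[ℝ] ℝ) := fun z =>
    (NormedSpace.inclusionInDoubleDual ℝ Z z).comp X.subtypeL
  have hev : ∀ x : X, ∃ C, ∀ z : S, ‖ev z x‖ ≤ C := by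
    intro x
    obtain ⟨C, hC⟩ := hS x x.2
    obtain ⟨D, hD⟩ := hS (-x) (X.neg_mem x.2)
    refine ⟨max C D, fun z => abs_le'.2 ⟨?_, ?_⟩⟩
    · exact (hC (mem_image_of_mem _ z.2)).trans (le_max_left C D)
    · exact (hD (mem_image_of_mem _ z.2)).trans (le_max_right C D)
  obtain ⟨C, hC⟩ := banach_steinhaus (E := X) (F := ℝ) (g := ev) hev
  obtain ⟨c, hc, hnorm⟩ := hX
  refine isBounded_iff_forall_norm_le.2 ⟨c⁻¹ * max C 0, fun z hz => ?_⟩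
  rw [le_inv_mul_iff₀ hc]
  refine (hnorm z).trans (Real.sSup_le ?_ (le_max_right C 0))
  rintro _ ⟨x, hx, hx1, rfl⟩
  calc x z ≤ ‖ev ⟨z, hz⟩ ⟨x, hx⟩‖ := le_abs_self _
    _ ≤ ‖ev ⟨z, hz⟩‖ := (ev ⟨z, hz⟩).unit_le_opNorm ⟨x, hx⟩ hx1
    _ ≤ max C 0 := (hC ⟨z, hz⟩).trans (le_max_left C 0)

lemma IsRelConvexBlockCompact.isBounded {S : Set Z}
    (hS : IsRelConvexBlockCompact (sigmaTop X) S) (hXclosed : IsClosed (X : Set (Z →L[ℝ] ℝ)))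
    (hX : IsNorming X) : Bornology.IsBounded S :=
  hX.isBounded_of_forall_bddAbove_image hXclosed fun _ hx => hS.bddAbove_image hx

end Boundedness

section LpLimits

variable {Ω : Type*} [MeasurableSpace Ω] {μ : Measure Ω} {p : ENNReal}

lemma exists_pos_forall_le_of_not_Lp_nonpos {H : Lp ℝ p μ} (hH : ¬ H ≤ 0) :
    ∃ ε > 0, ∃ A, MeasurableSet A ∧ 0 < μ A ∧ ∀ ω ∈ A, ε ≤ H ω := by
  let level : ℕ → Set Ω := fun n => {ω | 1 / ((n : ℝ) + 1) ≤ H ω}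
  have hlevel : μ (⋃ n, level n) ≠ 0 := by
    refine fun hnull => hH ((Lp.coeFn_le H 0).1 ?_)
    filter_upwards [measure_eq_zero_iff_ae_notMem.1 hnull, Lp.coeFn_zero ℝ p μ] with ω hω h0
    rw [h0]
    refine not_lt.1 fun hpos => hω (mem_iUnion.2 ?_)
    obtain ⟨n, hn⟩ := exists_nat_one_div_lt hpos
    exact ⟨n, hn.le⟩
  obtain ⟨n, hn⟩ := exists_measure_pos_of_not_measure_iUnion_null hlevel
  exact ⟨1 / ((n : ℝ) + 1), Nat.one_div_pos_of_nat, level n,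
    measurableSet_le measurable_const (Lp.stronglyMeasurable H).measurable, hn, fun _ hω => hω⟩

lemma exists_subset_tendstoUniformlyOn_of_tendsto_Lp [IsFiniteMeasure μ] [Fact (1 ≤ p)]
    {F : ℕ → Lp ℝ p μ} {H : Lp ℝ p μ} (hF : Tendsto F atTop (𝓝 H)) {A : Set Ω}
    (hA : MeasurableSet A) (hμA : 0 < μ A) :
    ∃ ns : ℕ → ℕ, StrictMono ns ∧ ∃ A' ⊆ A, MeasurableSet A' ∧ 0 < μ A' ∧
      TendstoUniformlyOn (fun k ω => F (ns k) ω) H atTop A' := by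
  obtain ⟨ns, hns, hae⟩ := (tendstoInMeasure_of_tendsto_Lp hF).exists_seq_tendsto_ae
  have hμA_real : 0 < μ.real A := ENNReal.toReal_pos hμA.ne' (measure_ne_top μ A)
  obtain ⟨N, -, hN, hμN, hunif⟩ := tendstoUniformlyOn_of_ae_tendsto
    (fun k => Lp.stronglyMeasurable (F (ns k))) (Lp.stronglyMeasurable H) hA (measure_ne_top μ A)
    (hae.mono fun ω hω _ => hω) (half_pos hμA_real)
  refine ⟨ns, hns, A \ N, sdiff_subset, hA.diff hN, ?_, hunif⟩
  have hμN_lt : μ N < μ A := by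
    refine hμN.trans_lt ?_
    rw [← ofReal_measureReal]
    exact (ENNReal.ofReal_lt_ofReal_iff hμA_real).2 (half_lt_self hμA_real)
  exact (tsub_pos_of_lt hμN_lt).trans_le le_measure_sdiff

end LpLimits

section CondG

variable {Ω : Type*} [MeasurableSpace Ω] {μ : Measure Ω} [IsFiniteMeasure μ]
  {Z : Type*} [NormedAddCommGroup Z] [NormedSpace ℝ Z] {X : Submodule ℝ (Z →L[ℝ] ℝ)}
  {ν : VectorMeasure Ω (Z →L[ℝ] ℝ)}

/-- The operator `z ↦ d⟨ν(·), z⟩/dμ` from `Z` to `L¹(μ)` of a `Z*`-valued vector measure `ν`. -/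
def evalDensity (ν : VectorMeasure Ω (Z →L[ℝ] ℝ)) (hν : ∀ A, μ A = 0 → ν A = 0) :
    Z →L[ℝ] Lp ℝ 1 μ :=
  (dualDensity ν hν).comp (NormedSpace.inclusionInDoubleDual ℝ Z)

lemma setIntegral_evalDensity (hν : ∀ A, μ A = 0 → ν A = 0) (z : Z) {A : Set Ω}
    (hA : MeasurableSet A) : ∫ ω in A, evalDensity ν hν z ω ∂μ = ν A z :=
  setIntegral_dualDensity ν hν _ hA

lemma le_apply_of_mem_avgRange (hν : ∀ A, μ A = 0 → ν A = 0) {A : Set Ω} {z : Z} {c : ℝ}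
    (hc : ∀ ω ∈ A, c ≤ evalDensity ν hν z ω) {w : Z →L[ℝ] ℝ} (hw : w ∈ avgRange μ ν A) :
    c ≤ w z := by
  obtain ⟨B, hB, hBA, hμB, rfl⟩ := hw
  have hle : ∫ _ in B, c ∂μ ≤ ∫ ω in B, evalDensity ν hν z ω ∂μ :=
    setIntegral_mono_on (integrable_const c).integrableOn (L1.integrable_coeFn _).integrableOn hB
      fun ω hω => hc ω (hBA hω)
  rw [setIntegral_evalDensity hν z hB, setIntegral_const, smul_eq_mul] at hle
  exact (le_inv_mul_iff₀ (ENNReal.toReal_pos hμB.ne' (measure_ne_top μ B))).2 hle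

lemma le_apply_of_mem_closure_wstarTop {S : Set (Z →L[ℝ] ℝ)} {z : Z} {c : ℝ}
    (hS : ∀ w ∈ S, c ≤ w z) {x : Z →L[ℝ] ℝ}
    (hx : x ∈ @closure _ (wstarTop Z) (convexHull ℝ S)) : c ≤ x z := by
  have hclosed : @IsClosed _ (wstarTop Z) {w : Z →L[ℝ] ℝ | c ≤ w z} := by
    let _ := wstarTop Z
    exact isClosed_le continuous_const ((continuous_apply z).comp continuous_induced_dom)
  have hconvex : Convex ℝ {w : Z →L[ℝ] ℝ | c ≤ w z} :=
    convex_halfSpace_ge (ContinuousLinearMap.apply ℝ ℝ z).toLinearMap.isLinear c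
  exact (@closure_minimal _ (wstarTop Z) _ _ (convexHull_min hS hconvex) hclosed) hx

lemma CondG.exists_mem_forall_le_apply (hG : CondG μ ν X) (hν : ∀ A, μ A = 0 → ν A = 0)
    {A : Set Ω} (hA : MeasurableSet A) (hμA : 0 < μ A) :
    ∃ x ∈ X, ∀ (z : Z) (c : ℝ), (∀ ω ∈ A, c ≤ evalDensity ν hν z ω) → c ≤ x z := by
  obtain ⟨x, hx, hxX⟩ := hG A hA hμA
  exact ⟨x, hxX, fun z c hc =>
    le_apply_of_mem_closure_wstarTop (fun w hw => le_apply_of_mem_avgRange hν hc hw) hx⟩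

lemma CondG.nonpos_of_tendsto_evalDensity (hG : CondG μ ν X) (hν : ∀ A, μ A = 0 → ν A = 0)
    {y : ℕ → Z} (hy : ∀ x ∈ X, Tendsto (fun k => x (y k)) atTop (𝓝 0)) {H : Lp ℝ 1 μ}
    (hH : Tendsto (fun k => evalDensity ν hν (y k)) atTop (𝓝 H)) : H ≤ 0 := by
  by_contra hpos
  obtain ⟨ε, hε, A, hA, hμA, hεA⟩ := exists_pos_forall_le_of_not_Lp_nonpos hpos
  obtain ⟨ns, hns, A', hA'A, hA', hμA', hunif⟩ :=
    exists_subset_tendstoUniformlyOn_of_tendsto_Lp hH hA hμA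
  obtain ⟨x, hxX, hx⟩ := hG.exists_mem_forall_le_apply hν hA' hμA'
  have hlarge : ∀ᶠ k in atTop, ε / 2 ≤ x (y (ns k)) := by
    filter_upwards [Metric.tendstoUniformlyOn_iff.1 hunif (ε / 2) (half_pos hε)] with k hk
    refine hx _ _ fun ω hω => ?_
    have hclose := (abs_lt.1 (hk ω hω)).2
    linarith [hεA ω (hA'A hω)]
  have hlim := ge_of_tendsto ((hy x hxX).comp hns.tendsto_atTop) hlarge
  exact (half_pos hε).not_ge hlim

lemma CondG.evalDensity_eq_of_tendsto (hG : CondG μ ν X) (hν : ∀ A, μ A = 0 → ν A = 0)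
    {w : ℕ → Z} {w₀ : Z} (hw : Tendsto w atTop (@nhds _ (sigmaTop X) w₀)) {F : Lp ℝ 1 μ}
    (hF : Tendsto (fun k => evalDensity ν hν (w k)) atTop (𝓝 F)) : evalDensity ν hν w₀ = F := by
  have hwX : ∀ x ∈ X, Tendsto (fun k => x (w k)) atTop (𝓝 (x w₀)) := fun x hx =>
    tendsto_apply_of_tendsto_sigmaTop hw hx
  have hle : F - evalDensity ν hν w₀ ≤ 0 :=
    hG.nonpos_of_tendsto_evalDensity hν (y := fun k => w k - w₀)
      (fun x hx => by simpa using (hwX x hx).sub_const (x w₀))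
      (by simpa using hF.sub_const (evalDensity ν hν w₀))
  have hge : evalDensity ν hν w₀ - F ≤ 0 :=
    hG.nonpos_of_tendsto_evalDensity hν (y := fun k => w₀ - w k)
      (fun x hx => by simpa using (hwX x hx).const_sub (x w₀))
      (by simpa using hF.const_sub (evalDensity ν hν w₀))
  exact le_antisymm (sub_nonpos.1 hge) (sub_nonpos.1 hle)

lemma CondG.nonpos_of_forall_exists_evalDensity_eq (hG : CondG μ ν X)
    (hν : ∀ A, μ A = 0 → ν A = 0) {H : Lp ℝ 1 μ}
    (hH : ∀ x ∈ X, ∃ y, x y = 0 ∧ evalDensity ν hν y = H) : H ≤ 0 := by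
  by_contra hpos
  obtain ⟨ε, hε, A, hA, hμA, hεA⟩ := exists_pos_forall_le_of_not_Lp_nonpos hpos
  obtain ⟨x, hxX, hx⟩ := hG.exists_mem_forall_le_apply hν hA hμA
  obtain ⟨y, hxy, rfl⟩ := hH x hxX
  exact hε.not_ge (hxy ▸ hx y ε hεA)

lemma CondG.eq_zero_of_forall_exists_evalDensity_eq (hG : CondG μ ν X)
    (hν : ∀ A, μ A = 0 → ν A = 0) {H : Lp ℝ 1 μ}
    (hH : ∀ x ∈ X, ∃ y, x y = 0 ∧ evalDensity ν hν y = H) : H = 0 := by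
  refine le_antisymm (hG.nonpos_of_forall_exists_evalDensity_eq hν hH) (neg_nonpos.1 ?_)
  refine hG.nonpos_of_forall_exists_evalDensity_eq hν fun x hx => ?_
  obtain ⟨y, hxy, rfl⟩ := hH x hx
  exact ⟨-y, by rw [map_neg, hxy, neg_zero], map_neg _ y⟩

end CondG

section WeakLimits

lemma mem_closure_convexHull_image_of_forall_tendsto {α F : Type*} [TopologicalSpace F]
    [AddCommGroup F] [Module ℝ F] [IsTopologicalAddGroup F] [ContinuousSMul ℝ F]
    [LocallyConvexSpace ℝ F] {l : Filter α} [l.NeBot] {f : α → F} {y : F}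
    (hf : ∀ φ : StrongDual ℝ F, Tendsto (fun a => φ (f a)) l (𝓝 (φ y))) {s : Set α}
    (hs : s ∈ l) : y ∈ closure (convexHull ℝ (f '' s)) := by
  by_contra hy
  obtain ⟨φ, u, hφ, hφy⟩ := geometric_hahn_banach_closed_point
    (convex_convexHull ℝ (f '' s)).closure isClosed_closure hy
  have hle : φ y ≤ u := le_of_tendsto (hf φ) <| by
    filter_upwards [hs] with a ha
    exact (hφ _ (subset_closure (subset_convexHull ℝ _ (mem_image_of_mem f ha)))).le
  exact hφy.not_ge hle

lemma exists_doubleDual_forall_tendsto_apply {Z : Type*} [NormedAddCommGroup Z] [NormedSpace ℝ Z]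
    {K : Set Z} (hK : Bornology.IsBounded K) {U : Ultrafilter Z} (hU : K ∈ U) :
    ∃ Λ : StrongDual ℝ (StrongDual ℝ Z), ∀ ζ : StrongDual ℝ Z,
      Tendsto (fun z => ζ z) U (𝓝 (Λ ζ)) := by
  obtain ⟨M, hM⟩ := isBounded_iff_forall_norm_le.1 hK
  let ι : Z → WeakDual ℝ (StrongDual ℝ Z) := fun z =>
    StrongDual.toWeakDual (NormedSpace.inclusionInDoubleDual ℝ Z z)
  have hι : ∀ z ∈ K, ι z ∈ WeakDual.toStrongDual ⁻¹' Metric.closedBall 0 M := fun z hz =>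
    (mem_closedBall_zero_iff (a := NormedSpace.inclusionInDoubleDual ℝ Z z)).2
      ((NormedSpace.double_dual_bound ℝ Z z).trans (hM z hz))
  obtain ⟨Λ, -, hΛ⟩ := (WeakDual.isCompact_closedBall (𝕜 := ℝ) 0 M).ultrafilter_le_nhds (U.map ι)
    (le_principal_iff.2 (Ultrafilter.mem_map.2 (mem_of_superset hU hι)))
  exact ⟨WeakDual.toStrongDual Λ, fun ζ => ((WeakDual.eval_continuous ζ).tendsto Λ).comp hΛ⟩

end WeakLimits

section BidualLimits

variable {Ω : Type*} [MeasurableSpace Ω] {μ : Measure Ω} [IsFiniteMeasure μ]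
  {Z : Type*} [NormedAddCommGroup Z] [NormedSpace ℝ Z] {X : Submodule ℝ (Z →L[ℝ] ℝ)}
  {ν : VectorMeasure Ω (Z →L[ℝ] ℝ)} {K : Set Z} {l : Filter Z} [l.NeBot]
  {Λ : StrongDual ℝ (StrongDual ℝ Z)}

lemma exists_seq_tendsto_evalDensity (hν : ∀ A, μ A = 0 → ν A = 0) (hK : K ∈ l)
    (hΛ : ∀ ζ : StrongDual ℝ Z, Tendsto (fun z => ζ z) l (𝓝 (Λ ζ))) (x : StrongDual ℝ Z) :
    ∃ z : ℕ → Z, (∀ n, z n ∈ convexHull ℝ K) ∧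
      Tendsto (fun n => evalDensity ν hν (z n)) atTop (𝓝 (dualDensity ν hν Λ)) ∧
      Tendsto (fun n => x (z n)) atTop (𝓝 (Λ x)) := by
  let J : Z →L[ℝ] Lp ℝ 1 μ × ℝ := (evalDensity ν hν).prod x
  have hJ : ∀ φ : StrongDual ℝ (Lp ℝ 1 μ × ℝ),
      Tendsto (fun z => φ (J z)) l (𝓝 (φ (dualDensity ν hν Λ, Λ x))) := by
    intro φ
    obtain ⟨ζ, hζ⟩ := exists_forall_apply_dualDensity_prod_eq ν hν x φ
    rw [hζ]
    exact (hΛ ζ).congr fun z => (hζ (NormedSpace.inclusionInDoubleDual ℝ Z z)).symm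
  have hmem := mem_closure_convexHull_image_of_forall_tendsto hJ hK
  rw [← IsLinearMap.image_convexHull (f := J) J.toLinearMap.isLinear,
    mem_closure_iff_seq_limit] at hmem
  obtain ⟨v, hv, hlim⟩ := hmem
  choose z hz hzv using hv
  obtain rfl : (fun n => J (z n)) = v := funext hzv
  exact ⟨z, hz, (continuous_fst.tendsto _).comp hlim, (continuous_snd.tendsto _).comp hlim⟩

lemma CondG.exists_evalDensity_eq_dualDensity (hG : CondG μ ν X) (hν : ∀ A, μ A = 0 → ν A = 0)
    (hKX : IsRelConvexBlockCompact (sigmaTop X) (convexHull ℝ K)) (hK : K ∈ l)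
    (hΛ : ∀ ζ : StrongDual ℝ Z, Tendsto (fun z => ζ z) l (𝓝 (Λ ζ))) {x : StrongDual ℝ Z}
    (hx : x ∈ X) : ∃ w : Z, x w = Λ x ∧ evalDensity ν hν w = dualDensity ν hν Λ := by
  obtain ⟨z, hz, hz_density, hzx⟩ := exists_seq_tendsto_evalDensity hν hK hΛ x
  obtain ⟨w, hzw, w₀, hw⟩ := hKX z hz
  refine ⟨w₀, ?_, ?_⟩
  · exact tendsto_nhds_unique (tendsto_apply_of_tendsto_sigmaTop hw hx)
      ((hzw.map x.toLinearMap).tendsto hzx)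
  · exact hG.evalDensity_eq_of_tendsto hν hw
      ((hzw.map (evalDensity ν hν).toLinearMap).tendsto hz_density)

lemma CondG.dualDensity_eq_evalDensity (hG : CondG μ ν X) (hν : ∀ A, μ A = 0 → ν A = 0)
    (hKX : IsRelConvexBlockCompact (sigmaTop X) (convexHull ℝ K)) (hK : K ∈ l)
    (hΛ : ∀ ζ : StrongDual ℝ Z, Tendsto (fun z => ζ z) l (𝓝 (Λ ζ))) {z : Z}
    (hz : ∀ x ∈ X, Λ x = x z) : dualDensity ν hν Λ = evalDensity ν hν z := by
  refine sub_eq_zero.1 (hG.eq_zero_of_forall_exists_evalDensity_eq hν fun x hx => ?_)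
  obtain ⟨w, hxw, hw⟩ := hG.exists_evalDensity_eq_dualDensity hν hKX hK hΛ hx
  exact ⟨w - z, by rw [map_sub, hxw, hz x hx, sub_self], by rw [map_sub, hw]⟩

end BidualLimits

theorem continuousOn_of_convexBlockCompact_hull_of_condG_general
    {Ω : Type*} [MeasurableSpace Ω] (μ : Measure Ω) [IsFiniteMeasure μ]
    {Z : Type*} [NormedAddCommGroup Z] [NormedSpace ℝ Z] (X : Submodule ℝ (Z →L[ℝ] ℝ))
    (K : Set Z) (hKbdd : Bornology.IsBounded K)
    (hK : IsRelConvexBlockCompact (sigmaTop X) (convexHull ℝ K))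
    (ν : VectorMeasure Ω (Z →L[ℝ] ℝ)) (hν : ∀ A : Set Ω, μ A = 0 → ν A = 0)
    (hG : CondG μ ν X) (B : Set Ω) (hB : MeasurableSet B) :
    @ContinuousOn Z ℝ (sigmaTop X) _ (fun z => ν B z) K := by
  intro z _
  refine (tendsto_iff_ultrafilter _ _ _).2 fun U hU => ?_
  obtain ⟨hUz, hUK⟩ := le_inf_iff.1 hU
  have hKU : K ∈ U := le_principal_iff.1 hUK
  obtain ⟨Λ, hΛ⟩ := exists_doubleDual_forall_tendsto_apply hKbdd hKU
  have hΛX : ∀ x ∈ X, Λ x = x z := fun x hx =>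
    tendsto_nhds_unique (hΛ x) (tendsto_apply_of_tendsto_sigmaTop hUz hx)
  have hΛν : Λ (ν B) = ν B z := by
    rw [← setIntegral_dualDensity ν hν Λ hB, hG.dualDensity_eq_evalDensity hν hK hKU hΛ hΛX,
      setIntegral_evalDensity hν z hB]
  exact (hΛ (ν B)).trans_eq (congrArg 𝓝 hΛν)

/-- If `co(K)` is relatively convex block compact in `(Z, σ(Z,X))` and `ν ∈ ca(μ, Z*)`
satisfies condition (G), then the restriction `ν(B)|_K` is `σ(Z,X)`-continuous for
every `B ∈ Σ`. -/
theorem continuousOn_of_convexBlockCompact_hull_of_condG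
    {Ω : Type*} [MeasurableSpace Ω] (μ : Measure Ω) [IsFiniteMeasure μ]
    {Z : Type*} [NormedAddCommGroup Z] [NormedSpace ℝ Z] [CompleteSpace Z]
    (X : Submodule ℝ (Z →L[ℝ] ℝ)) (hXclosed : IsClosed (X : Set (Z →L[ℝ] ℝ)))
    (hXnorming : IsNorming X)
    (K : Set Z)
    (hK : ∀ z : ℕ → Z, (∀ n, z n ∈ convexHull ℝ K) →
      ∃ w : ℕ → Z, ConvexBlock z w ∧
        ∃ w₀ : Z, Tendsto w atTop (@nhds _ (sigmaTop X) w₀))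
    (ν : VectorMeasure Ω (Z →L[ℝ] ℝ))
    (hν : ∀ A : Set Ω, μ A = 0 → ν A = 0)
    (hG : CondG μ ν X) :
    ∀ B : Set Ω, MeasurableSet B →
      @ContinuousOn Z ℝ (sigmaTop X) _ (fun z => ν B z) K := by
  exact continuousOn_of_convexBlockCompact_hull_of_condG_general μ X K
    ((IsRelConvexBlockCompact.isBounded hK hXclosed hXnorming).subset (subset_convexHull ℝ K))
    hK ν hν hG
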